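/- For all positive integers m and n, the number of spanning trees of the complete bipartite graph K_{m,n} equals n^{m−1}·m^{n−1}. -/

import Mathlib

/-- `T` is (the edge set of) a spanning tree of `G`: `T ⊆ E(G)` and the graph `(V, T)`
is connected and acyclic. -/
def IsSpanningTree {V : Type*} (G : SimpleGraph V) (T : Set (Sym2 V)) : Prop :=
  T ⊆ G.edgeSet ∧ (SimpleGraph.fromEdgeSet T).Connected ∧ (SimpleGraph.fromEdgeSet T).IsAcyclic

/-- The number of spanning trees of `G`. -/
noncomputable def treeCount {V : Type*} (G : SimpleGraph V) : ℕ :=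
  Nat.card {T : Set (Sym2 V) // IsSpanningTree G T}

/-!
Fix a root `r`. Orienting every edge towards `r` identifies the spanning trees of a finite graph
with the functions choosing for each vertex `v ≠ r` a neighbour, its parent, such that following
parents never runs forever. The Laplacian with the row and column of `r` deleted has as its row
at `v` the sum over the neighbours `w` of `v` of `e_v - e_w`, so by multilinearity its determinant
is a sum over all choices of a neighbour for each `v ≠ r`; a choice contributes `1` if it is a
parent function (the matrix is unitriangular) and `0` otherwise (the indicator of the vertices that
never reach `r` is in the kernel). This is the matrix-tree theorem. For `K_{m,n}` the reduced
Laplacian consists of two scalar blocks and two constant blocks, and its determinant is a Schur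
complement computation.
-/

open Matrix

section ParentFunctions

variable {V : Type*} {r : V} {G H : SimpleGraph V} {p : {v // v ≠ r} → V}

/-- `ParentRel p w v` says that `w` is the parent of `v` under the parent assignment `p`; the
root `r` has no parent. -/
def ParentRel (p : {v // v ≠ r} → V) (w v : V) : Prop :=
  ∃ hv : v ≠ r, p ⟨v, hv⟩ = w

/-- The set of the edges `{v, p v}`, `v ≠ r`, of the graph underlying a parent assignment. -/
def parentEdges (p : {v // v ≠ r} → V) : Set (Sym2 V) :=
  Set.range fun v : {v // v ≠ r} => s(↑v, p v)

/-- `p` is the parent function of a tree in `G` rooted at `r`: parents are neighbours, and no vertex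
has an infinite line of ancestors. The latter is expressed by well-foundedness; as `r` is the only
vertex without a parent, it says that every line of ancestors ends at `r`. -/
structure IsParentFun (G : SimpleGraph V) (p : {v // v ≠ r} → V) : Prop where
  adj : ∀ v : {v // v ≠ r}, G.Adj v (p v)
  wellFounded : WellFounded (ParentRel p)

theorem edgeSet_fromEdgeSet_of_subset {T : Set (Sym2 V)} (hT : T ⊆ G.edgeSet) :
    (SimpleGraph.fromEdgeSet T).edgeSet = T := by
  rw [SimpleGraph.edgeSet_fromEdgeSet, sdiff_eq_left, Set.disjoint_left]
  exact fun e he => G.not_isDiag_of_mem_edgeSet (hT he)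

theorem IsParentFun.parentEdges_subset (hp : IsParentFun G p) : parentEdges p ⊆ G.edgeSet :=
  Set.range_subset_iff.2 hp.adj

theorem parentRel_apply (p : {v // v ≠ r} → V) (v : {v // v ≠ r}) : ParentRel p (p v) v :=
  ⟨v.2, rfl⟩

theorem ne_parent_of_wellFounded (hp : WellFounded (ParentRel p)) (v : {v // v ≠ r}) :
    (v : V) ≠ p v := fun hv =>
  hp.irrefl.irrefl _ (hv ▸ parentRel_apply p v : ParentRel p v v)

theorem acc_parentRel_apply_iff (p : {v // v ≠ r} → V) (v : {v // v ≠ r}) :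
    Acc (ParentRel p) (p v) ↔ Acc (ParentRel p) v := by
  refine ⟨fun h => ⟨_, ?_⟩, fun h => h.inv (parentRel_apply p v)⟩
  rintro _ ⟨_, rfl⟩
  exact h

theorem acc_parentRel_root (p : {v // v ≠ r} → V) : Acc (ParentRel p) r :=
  ⟨_, fun _ ⟨hr, _⟩ => absurd rfl hr⟩

theorem IsParentFun.mono (hGH : G ≤ H) (hp : IsParentFun G p) : IsParentFun H p :=
  ⟨fun v => hGH (hp.adj v), hp.wellFounded⟩

theorem connected_fromEdgeSet_parentEdges (hp : WellFounded (ParentRel p)) :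
    (SimpleGraph.fromEdgeSet (parentEdges p)).Connected := by
  have adj_parent (v : {v // v ≠ r}) : (SimpleGraph.fromEdgeSet (parentEdges p)).Adj v (p v) :=
    (SimpleGraph.fromEdgeSet_adj _).2 ⟨⟨v, rfl⟩, ne_parent_of_wellFounded hp v⟩
  have reachable_root (v : V) : (SimpleGraph.fromEdgeSet (parentEdges p)).Reachable v r := by
    induction v using hp.induction with
    | _ v ih =>
      by_cases hv : v = r
      · rw [hv]
      · exact (adj_parent ⟨v, hv⟩).reachable.trans (ih _ ⟨hv, rfl⟩)
  have : Nonempty V := ⟨r⟩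
  exact ⟨fun u v => (reachable_root u).trans (reachable_root v).symm⟩

theorem card_parentEdges_lt [Finite V] (p : {v // v ≠ r} → V) :
    Nat.card (parentEdges p) < Nat.card V :=
  (Finite.card_range_le _).trans_lt (Finite.card_subtype_lt (not_not.2 (rfl : r = r)))

theorem IsParentFun.isSpanningTree [Finite V] (hp : IsParentFun G p) :
    IsSpanningTree G (parentEdges p) := by
  have connected := connected_fromEdgeSet_parentEdges hp.wellFounded
  refine ⟨hp.parentEdges_subset, connected, ?_⟩
  refine (SimpleGraph.isTree_iff_connected_and_card.2 ⟨connected, ?_⟩).isAcyclic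
  refine le_antisymm ?_ connected.card_vert_le_card_edgeSet_add_one
  rw [edgeSet_fromEdgeSet_of_subset hp.parentEdges_subset]
  exact card_parentEdges_lt p

theorem eq_of_parentEdges_eq {p q : {v // v ≠ r} → V} (hq : WellFounded (ParentRel q))
    (hpq : parentEdges p = parentEdges q) : p = q := by
  suffices ∀ v (hv : v ≠ r), p ⟨v, hv⟩ = q ⟨v, hv⟩ from funext fun v => this v v.2
  intro v
  induction v using hq.induction with
  | _ v ih =>
    intro hv
    obtain ⟨u, hu⟩ : s(v, q ⟨v, hv⟩) ∈ parentEdges p := hpq ▸ ⟨⟨v, hv⟩, rfl⟩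
    rcases Sym2.eq_iff.1 hu with ⟨rfl, hpu⟩ | ⟨hqv, hpu⟩
    · exact hpu
    · have hqu : q u = v := (ih u ⟨hv, hqv.symm⟩ u.2).symm.trans hpu
      have hvu : ParentRel q u v := ⟨hv, hqv.symm⟩
      exact (hq.asymmetric _ _ hvu ⟨u.2, hqu⟩).elim

theorem exists_adj_dist_lt (hG : G.Connected) {v : V} (hv : v ≠ r) :
    ∃ w, G.Adj v w ∧ G.dist w r < G.dist v r := by
  obtain ⟨walk, hwalk⟩ := hG.exists_walk_length_eq_dist v r
  cases walk with
  | nil => exact absurd rfl hv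
  | cons hadj tail =>
    rw [SimpleGraph.Walk.length_cons] at hwalk
    exact ⟨_, hadj, by have := SimpleGraph.dist_le tail; omega⟩

theorem exists_isParentFun_of_connected (hG : G.Connected) (r : V) :
    ∃ p : {v // v ≠ r} → V, IsParentFun G p := by
  choose p adj dist_lt using fun v : {v // v ≠ r} => exists_adj_dist_lt hG v.2
  refine ⟨p, adj, Subrelation.wf ?_ (measure fun v => G.dist v r).wf⟩
  rintro _ v ⟨hv, rfl⟩
  exact dist_lt ⟨v, hv⟩

theorem IsParentFun.parentEdges_eq_edgeSet (hG : G.IsTree) (hp : IsParentFun G p) :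
    parentEdges p = G.edgeSet := by
  refine hp.parentEdges_subset.antisymm ((SimpleGraph.le_fromEdgeSet_iff _ _).1 ?_)
  exact (SimpleGraph.isTree_iff_minimal_connected.1 hG).2
    (connected_fromEdgeSet_parentEdges hp.wellFounded)
    ((SimpleGraph.fromEdgeSet_le _).2 (Set.sdiff_subset.trans hp.parentEdges_subset))

theorem IsSpanningTree.exists_isParentFun {T : Set (Sym2 V)} (hT : IsSpanningTree G T) (r : V) :
    ∃ p : {v // v ≠ r} → V, IsParentFun G p ∧ parentEdges p = T := by
  obtain ⟨subset, connected, acyclic⟩ := hT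
  obtain ⟨p, hp⟩ := exists_isParentFun_of_connected connected r
  have le : SimpleGraph.fromEdgeSet T ≤ G :=
    (SimpleGraph.fromEdgeSet_le _).2 (Set.sdiff_subset.trans subset)
  exact ⟨p, hp.mono le, (hp.parentEdges_eq_edgeSet ⟨connected, acyclic⟩).trans
    (edgeSet_fromEdgeSet_of_subset subset)⟩

theorem treeCount_eq_card_isParentFun [Finite V] (G : SimpleGraph V) (r : V) :
    treeCount G = Nat.card {p : {v // v ≠ r} → V // IsParentFun G p} := by
  refine (Nat.card_congr (Equiv.ofBijective
    (fun p => ⟨parentEdges p.1, p.2.isSpanningTree⟩) ⟨fun p q hpq => ?_, fun T => ?_⟩)).symm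
  · exact Subtype.ext (eq_of_parentEdges_eq q.2.wellFounded (congrArg Subtype.val hpq))
  · obtain ⟨p, hp, hpT⟩ := T.2.exists_isParentFun r
    exact ⟨⟨p, hp⟩, Subtype.ext hpT⟩

end ParentFunctions

section MatrixTree

theorem det_eq_prod_diag_of_lt {n R α : Type*} [Fintype n] [DecidableEq n] [CommRing R]
    [LinearOrder α] {M : Matrix n n R} (b : n → α)
    (hM : ∀ i j, i ≠ j → M i j ≠ 0 → b j < b i) : M.det = ∏ i, M i i := by
  have blockTriangular : M.BlockTriangular (OrderDual.toDual ∘ b) := fun i j hij => by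
    by_contra hne
    exact (hM i j (fun h => hij.ne (h ▸ rfl)) hne).not_gt hij
  have square_block_eq (a : αᵒᵈ) : M.toSquareBlock (OrderDual.toDual ∘ b) a =
      diagonal fun i : {i // OrderDual.toDual (b i) = a} => M i i := by
    ext i j
    rw [toSquareBlock_def, of_apply, diagonal_apply]
    split_ifs with hij
    · rw [hij]
    · by_contra hne
      exact (hM i j (Subtype.coe_injective.ne hij) hne).ne (i.2.trans j.2.symm).symm
  rw [blockTriangular.det, ← Finset.prod_fiberwise_of_maps_to
    (fun i _ => Finset.mem_image_of_mem (OrderDual.toDual ∘ b) (Finset.mem_univ i))]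
  refine Finset.prod_congr rfl fun a _ => ?_
  rw [square_block_eq, det_diagonal]
  refine (Finset.prod_subtype _ (fun i => ?_) fun i => M i i).symm
  simp only [Finset.mem_filter_univ, Function.comp_apply]

theorem det_eq_zero_of_mulVec_eq_zero {n R : Type*} [Fintype n] [DecidableEq n] [CommRing R]
    {M : Matrix n n R} {x : n → R} (hM : M *ᵥ x = 0) {i : n} (hi : x i = 1) : M.det = 0 :=
  calc M.det = (M.det • x) i := by simp [hi]
    _ = (M.adjugate *ᵥ M *ᵥ x) i := by
      rw [mulVec_mulVec, adjugate_mul, smul_mulVec, one_mulVec]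
    _ = 0 := by rw [hM, mulVec_zero, Pi.zero_apply]

variable {V : Type*} [DecidableEq V] {r : V} (R : Type*) [CommRing R]

/-- The Laplacian of the digraph with the arcs `v → p v`, `v ≠ r`, without the row and column
of `r`: the matrices into which the reduced Laplacian of a graph expands by multilinearity. -/
def parentLaplacian (p : {v // v ≠ r} → V) : Matrix {v // v ≠ r} {v // v ≠ r} R :=
  of fun v x => (1 : Matrix V V R) v x - (1 : Matrix V V R) (p v) x

theorem parentLaplacian_mulVec_apply [Fintype V] (p : {v // v ≠ r} → V) (x : V → R) (hx : x r = 0)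
    (v : {v // v ≠ r}) : (parentLaplacian R p *ᵥ fun w => x w) v = x v - x (p v) := by
  have sum_one_mul (u : V) : ∑ w : {w // w ≠ r}, (1 : Matrix V V R) u w * x w = x u := by
    by_cases hu : u = r
    · subst hu
      rw [hx]
      exact Finset.sum_eq_zero fun w _ => by rw [one_apply_ne' w.2, zero_mul]
    · rw [Fintype.sum_eq_single ⟨u, hu⟩ fun w hw => ?_, one_apply_eq, one_mul]
      rw [one_apply_ne' (Subtype.coe_injective.ne hw), zero_mul]
  simp only [mulVec, dotProduct, parentLaplacian, of_apply, sub_mul, Finset.sum_sub_distrib,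
    sum_one_mul]

theorem det_parentLaplacian_of_wellFounded [Fintype V] {p : {v // v ≠ r} → V}
    (hp : WellFounded (ParentRel p)) : (parentLaplacian R p).det = 1 := by
  have : IsWellFounded V (ParentRel p) := ⟨hp⟩
  rw [det_eq_prod_diag_of_lt fun v : {v // v ≠ r} => IsWellFounded.rank (ParentRel p) v]
  · exact Finset.prod_eq_one fun v _ => by
      simp [parentLaplacian, (ne_parent_of_wellFounded hp v).symm]
  · intro v x hvx hne
    have hx : p v = x := by
      by_contra hx
      exact hne (by simp [parentLaplacian, Subtype.coe_injective.ne hvx, hx])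
    exact hx ▸ IsWellFounded.rank_lt_of_rel (parentRel_apply p v)

theorem det_parentLaplacian_of_not_wellFounded [Fintype V] {p : {v // v ≠ r} → V}
    (hp : ¬ WellFounded (ParentRel p)) : (parentLaplacian R p).det = 0 := by
  classical
  let unrooted (v : V) : R := if Acc (ParentRel p) v then 0 else 1
  obtain ⟨u, hu⟩ : ∃ u, ¬ Acc (ParentRel p) u := by
    by_contra! h
    exact hp ⟨h⟩
  have hur : u ≠ r := fun h => hu (h ▸ acc_parentRel_root p)
  refine det_eq_zero_of_mulVec_eq_zero (x := fun v => unrooted v) (i := ⟨u, hur⟩) ?_ (if_neg hu)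
  funext v
  rw [parentLaplacian_mulVec_apply R p unrooted (if_pos (acc_parentRel_root p))]
  simp only [unrooted, acc_parentRel_apply_iff, sub_self, Pi.zero_apply]

theorem lapMatrix_apply_eq_sum [Fintype V] (G : SimpleGraph V) [DecidableRel G.Adj] (v x : V) :
    G.lapMatrix R v x =
      ∑ w ∈ G.neighborFinset v, ((1 : Matrix V V R) v x - (1 : Matrix V V R) w x) := by
  simp [SimpleGraph.lapMatrix, SimpleGraph.degMatrix, diagonal_apply, one_apply]

theorem det_reduced_lapMatrix_eq_sum [Fintype V] (G : SimpleGraph V) [DecidableRel G.Adj] (r : V) :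
    ((G.lapMatrix R).submatrix ((↑) : {v // v ≠ r} → V) (↑)).det =
      ∑ p ∈ Fintype.piFinset fun v : {v // v ≠ r} => G.neighborFinset v,
        (parentLaplacian R p).det := by
  have row_eq (v : {v // v ≠ r}) :
      (G.lapMatrix R).submatrix ((↑) : {v // v ≠ r} → V) ((↑) : {v // v ≠ r} → V) v =
        ∑ w ∈ G.neighborFinset v, fun x : {v // v ≠ r} =>
          (1 : Matrix V V R) v x - (1 : Matrix V V R) w x := by
    ext x
    rw [submatrix_apply, lapMatrix_apply_eq_sum, Finset.sum_apply]
  exact (congrArg (detRowAlternating (R := R)) (funext row_eq)).trans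
    (detRowAlternating.toMultilinearMap.map_sum_finset _ _)

theorem treeCount_eq_det_reduced_lapMatrix [Fintype V] (G : SimpleGraph V) [DecidableRel G.Adj]
    (r : V) :
    (treeCount G : R) = ((G.lapMatrix R).submatrix ((↑) : {v // v ≠ r} → V) (↑)).det := by
  classical
  have det_eq (p : {v // v ≠ r} → V) :
      (parentLaplacian R p).det = if WellFounded (ParentRel p) then 1 else 0 := by
    split_ifs with hp
    exacts [det_parentLaplacian_of_wellFounded R hp, det_parentLaplacian_of_not_wellFounded R hp]
  rw [det_reduced_lapMatrix_eq_sum, Finset.sum_congr rfl fun p _ => det_eq p, Finset.sum_boole,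
    treeCount_eq_card_isParentFun G r, Nat.card_eq_fintype_card, Fintype.card_subtype]
  congr 2
  ext p
  simp only [Finset.mem_filter, Finset.mem_univ, true_and, Fintype.mem_piFinset,
    SimpleGraph.mem_neighborFinset]
  exact ⟨fun hp => ⟨hp.adj, hp.wellFounded⟩, fun ⟨adj, wf⟩ => ⟨adj, wf⟩⟩

end MatrixTree

section CompleteBipartite

variable {α β : Type*} [Fintype α] [Fintype β] [DecidableEq α] [DecidableEq β]

theorem det_fromBlocks_smul_one_const_neg_one {K : Type*} [Field K] {x y : K}
    (hx : x ≠ 0) (hy : y ≠ 0) :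
    (fromBlocks (x • 1 : Matrix α α K) (of fun _ _ => -1) (of fun _ _ => -1)
      (y • 1 : Matrix β β K)).det =
    x ^ Fintype.card α * y ^ Fintype.card β *
      (1 - Fintype.card α * Fintype.card β / (x * y)) := by
  let _ : Invertible (x • 1 : Matrix α α K) :=
    ⟨x⁻¹ • 1, by simp [smul_smul, hx], by simp [smul_smul, hx]⟩
  have invOf_eq : ⅟(x • 1 : Matrix α α K) = x⁻¹ • 1 := rfl
  have const_mul_const : (of fun _ _ => -1 : Matrix β α K) * (of fun _ _ => -1 : Matrix α β K) =
      of fun _ _ => (Fintype.card α : K) := by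
    ext
    simp [mul_apply]
  have schur_complement_eq :
      y • 1 - x⁻¹ • (of fun _ _ => (Fintype.card α : K) : Matrix β β K) =
        y • (1 + replicateCol Unit (fun _ : β => (1 : K)) *
          replicateRow Unit (fun _ : β => -(Fintype.card α / (x * y)))) := by
    ext i j
    simp only [Matrix.sub_apply, Matrix.add_apply, Matrix.smul_apply, smul_eq_mul, of_apply,
      mul_apply, replicateCol_apply, replicateRow_apply, Finset.univ_unique, Finset.sum_singleton]
    field_simp
    ring
  rw [det_fromBlocks₁₁, invOf_eq, Matrix.mul_smul, Matrix.mul_one, Matrix.smul_mul,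
    const_mul_const, schur_complement_eq, det_smul, det_smul, det_one,
    det_one_add_replicateCol_mul_replicateRow]
  simp only [dotProduct, Finset.sum_const, Finset.card_univ, nsmul_eq_mul]
  ring

theorem lapMatrix_completeBipartiteGraph (R : Type*) [CommRing R]
    [DecidableRel (completeBipartiteGraph α β).Adj] :
    (completeBipartiteGraph α β).lapMatrix R =
      fromBlocks ((Fintype.card β : R) • 1) (of fun _ _ => -1) (of fun _ _ => -1)
        ((Fintype.card α : R) • 1) := by
  ext (i | i) (j | j) <;>
    simp [SimpleGraph.lapMatrix, SimpleGraph.degMatrix, SimpleGraph.degree_eq_sum_if_adj,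
      diagonal_apply, one_apply, Fintype.sum_sum_type, -Finset.sum_boole]

theorem det_reduced_lapMatrix_completeBipartiteGraph (R : Type*) [CommRing R]
    [DecidableRel (completeBipartiteGraph α β).Adj] (a : α) :
    (((completeBipartiteGraph α β).lapMatrix R).submatrix
      ((↑) : {v : α ⊕ β // v ≠ Sum.inl a} → α ⊕ β) (↑)).det =
    (fromBlocks ((Fintype.card β : R) • 1 : Matrix {i // i ≠ a} {i // i ≠ a} R)
      (of fun _ _ => -1) (of fun _ _ => -1) ((Fintype.card α : R) • 1 : Matrix β β R)).det := by
  let e : {i // i ≠ a} ⊕ β ≃ {v : α ⊕ β // v ≠ Sum.inl a} :=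
    (Equiv.sumCongr (Equiv.subtypeEquivRight fun i => Sum.inl_injective.ne_iff.symm)
      (Equiv.subtypeUnivEquiv fun _ => Sum.inr_ne_inl).symm).trans
    (Equiv.subtypeSum (p := (· ≠ Sum.inl a))).symm
  rw [← det_submatrix_equiv_self e, lapMatrix_completeBipartiteGraph]
  congr 1
  ext (i | i) (j | j) <;> simp [e, one_apply, Equiv.subtypeSum, Subtype.ext_iff]

end CompleteBipartite

theorem completeBipartite_tree_count_general (α β : Type*) [Fintype α] [Fintype β]
    [Nonempty α] [Nonempty β] :
    treeCount (completeBipartiteGraph α β) =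
      Fintype.card β ^ (Fintype.card α - 1) * Fintype.card α ^ (Fintype.card β - 1) := by
  classical
  obtain ⟨a⟩ := ‹Nonempty α›
  have card_left_pos : 0 < Fintype.card α := Fintype.card_pos_iff.2 ⟨a⟩
  have card_right_pos : 0 < Fintype.card β := Fintype.card_pos
  suffices (treeCount (completeBipartiteGraph α β) : ℚ) =
      Fintype.card β ^ (Fintype.card α - 1) * Fintype.card α ^ (Fintype.card β - 1) by
    exact_mod_cast this
  rw [treeCount_eq_det_reduced_lapMatrix ℚ _ (Sum.inl a),
    det_reduced_lapMatrix_completeBipartiteGraph,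
    det_fromBlocks_smul_one_const_neg_one (by positivity) (by positivity)]
  have card_ne : Fintype.card {i // i ≠ a} = Fintype.card α - 1 := Set.card_ne_eq a
  rw [card_ne, Nat.cast_pred card_left_pos, mul_assoc, ← pow_sub_one_mul card_right_pos.ne']
  field_simp
  ring

/-- The complete bipartite graph `K_{m,n}` has `n^(m-1) · m^(n-1)` spanning trees. -/
theorem completeBipartite_tree_count (m n : ℕ) (hm : 0 < m) (hn : 0 < n) :
    treeCount (completeBipartiteGraph (Fin m) (Fin n)) = n ^ (m - 1) * m ^ (n - 1) := by
  have : NeZero m := ⟨hm.ne'⟩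
  have : NeZero n := ⟨hn.ne'⟩
  simpa only [Fintype.card_fin] using completeBipartite_tree_count_general (Fin m) (Fin n)
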